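/- arXiv:2305.03985 — 2 statements merged into one kernel-verified Lean document; each statement's English description precedes it below -/
import Mathlib

section
/- Let H_1, …, H_t (t ≥ 2) be halfplanes such that 0 < ang(H_1, H_2) < ang(H_1, H_3) < ⋯ < ang(H_1, H_t) ≤ π. If the family {H_1, …, H_t} is irreducible, then ⋂_{i=1}^{t} H_i = H_1 ∩ H_t. -/
open scoped Classical

/-- The number of sets in the finite family `F` containing the point `p`. -/
noncomputable def memb (p : ℝ × ℝ) (F : Finset (Set (ℝ × ℝ))) : ℕ :=
  (F.filter (fun R => p ∈ R)).card

/-- The membership of a finite point set `S'` with respect to a finite family `F`. -/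
noncomputable def membS (S' : Finset (ℝ × ℝ)) (F : Finset (Set (ℝ × ℝ))) : ℕ :=
  S'.sup (fun p => memb p F)

/-- `F` is a set cover of `S`. -/
def IsCover (S : Finset (ℝ × ℝ)) (F : Finset (Set (ℝ × ℝ))) : Prop :=
  ∀ p ∈ S, ∃ R ∈ F, p ∈ R

/-- The minimum membership of `S'` over all set covers of `S` chosen from `F`. -/
noncomputable def optMemb (S S' : Finset (ℝ × ℝ)) (F : Finset (Set (ℝ × ℝ))) : ℕ :=
  sInf {m : ℕ | ∃ G ⊆ F, IsCover S G ∧ membS S' G = m}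

/-- The closed axis-parallel unit square with bottom-left corner `(a, b)`. -/
def unitSquare (a b : ℝ) : Set (ℝ × ℝ) :=
  {p | a ≤ p.1 ∧ p.1 ≤ a + 1 ∧ b ≤ p.2 ∧ p.2 ≤ b + 1}

/-- The half-open unit grid cell `[i, i+1) × [j, j+1)`. -/
def gridCell (i j : ℤ) : Set (ℝ × ℝ) :=
  {p | (i : ℝ) ≤ p.1 ∧ p.1 < (i : ℝ) + 1 ∧ (j : ℝ) ≤ p.2 ∧ p.2 < (j : ℝ) + 1}

/-- The halfplane with inward normal `v` and offset `c`: `{p : ⟨p, v⟩ ≥ c}`. -/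
def halfplane (v : ℝ × ℝ) (c : ℝ) : Set (ℝ × ℝ) :=
  {p | c ≤ v.1 * p.1 + v.2 * p.2}

/-- `H` is a halfplane (for some unit inward normal). -/
def IsHalfplane (H : Set (ℝ × ℝ)) : Prop :=
  ∃ v : ℝ × ℝ, ∃ c : ℝ, v.1 ^ 2 + v.2 ^ 2 = 1 ∧ H = halfplane v c

/-- `H` is redundant in the finite family `R`. -/
def Redundant (R : Finset (Set (ℝ × ℝ))) (H : Set (ℝ × ℝ)) : Prop :=
  ⋃₀ (R : Set (Set (ℝ × ℝ))) = ⋃₀ ((R.erase H : Finset (Set (ℝ × ℝ))) : Set (Set (ℝ × ℝ)))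

/-- The finite family `R` is irreducible: no member is redundant. -/
def IrreducibleFam (R : Finset (Set (ℝ × ℝ))) : Prop :=
  ∀ H ∈ R, ¬ Redundant R H

/-- The clockwise ordered angle from `u` to `v`, i.e. the unique `θ ∈ [0, 2π)` such that
rotating `u` clockwise by `θ` yields `v` (for nonzero vectors of equal norm). -/
noncomputable def ang (u v : ℝ × ℝ) : ℝ :=
  let a := Complex.arg ((Complex.ofReal u.1 + Complex.ofReal u.2 * Complex.I) /
      (Complex.ofReal v.1 + Complex.ofReal v.2 * Complex.I))
  if a < 0 then a + 2 * Real.pi else a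

/-!
If the direction `x` lies strictly between `u` and `w` and the clockwise angle from `u` to `w` is at
most `π`, then a nonnegative multiple of `x` is a positive combination of `u` and `w`. Hence a
displacement that strictly decreases both `⟨u, ·⟩` and `⟨w, ·⟩` strictly decreases `⟨x, ·⟩`.
If some point `p` of `H_u ∩ H_w` were outside `H_x`, irreducibility would provide a point `q` of
`H_x` outside `H_u` and `H_w`, and the displacement `q - p` would contradict this.
-/

/-- The planar cross product, used through its sign as a proxy for the sine of the angle `ang u w`.
The sign is opposite to the usual one because `ang` is measured clockwise. -/
def clockwiseCross (u w : ℝ × ℝ) : ℝ := u.2 * w.1 - u.1 * w.2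

lemma clockwiseCross_mul_dot (u x w d : ℝ × ℝ) :
    clockwiseCross u w * (x.1 * d.1 + x.2 * d.2) =
      clockwiseCross x w * (u.1 * d.1 + u.2 * d.2) +
        clockwiseCross u x * (w.1 * d.1 + w.2 * d.2) := by
  simp only [clockwiseCross]
  ring

section Angle

open Complex

variable {u x w : ℝ × ℝ}

lemma ne_zero_of_ang_pos (h : 0 < ang u w) : u ≠ 0 ∧ w ≠ 0 := by
  constructor <;> rintro rfl <;> simp [ang] at h

lemma coe_ang (hu : u ≠ 0) (hw : w ≠ 0) :
    (ang u w : Real.Angle) = (equivRealProdCLM.symm u).arg - (equivRealProdCLM.symm w).arg := by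
  rw [← arg_div_coe_angle (by simpa using hu) (by simpa using hw)]
  simp only [ang, equivRealProdCLM_symm_apply]
  split_ifs <;> simp

lemma coe_ang_sub_ang (hu : u ≠ 0) (hx : x ≠ 0) (hw : w ≠ 0) :
    ((ang u w - ang u x : ℝ) : Real.Angle) = ang x w := by
  rw [Real.Angle.coe_sub, coe_ang hu hw, coe_ang hu hx, coe_ang hx hw, sub_sub_sub_cancel_left]

lemma clockwiseCross_eq_norm_mul_sin_ang (hu : u ≠ 0) (hw : w ≠ 0) :
    clockwiseCross u w =
      ‖equivRealProdCLM.symm u‖ * ‖equivRealProdCLM.symm w‖ * Real.sin (ang u w) := by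
  set y := equivRealProdCLM.symm u with hy
  set z := equivRealProdCLM.symm w with hz
  calc clockwiseCross u w = y.im * z.re - y.re * z.im := by simp [clockwiseCross, hy, hz]
    _ = ‖y‖ * ‖z‖ * Real.sin (y.arg - z.arg) := by
      rw [← norm_mul_sin_arg y, ← norm_mul_cos_arg y, ← norm_mul_sin_arg z, ← norm_mul_cos_arg z,
        Real.sin_sub]
      ring
    _ = ‖y‖ * ‖z‖ * Real.sin (ang u w) := by
      rw [← Real.Angle.sin_coe (ang u w), coe_ang hu hw, ← Real.Angle.coe_sub, Real.Angle.sin_coe]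

lemma clockwiseCross_pos_iff (hu : u ≠ 0) (hw : w ≠ 0) :
    0 < clockwiseCross u w ↔ 0 < Real.sin (ang u w) := by
  have hnorm : 0 < ‖equivRealProdCLM.symm u‖ * ‖equivRealProdCLM.symm w‖ :=
    mul_pos (norm_pos_iff.2 (by simpa using hu)) (norm_pos_iff.2 (by simpa using hw))
  rw [clockwiseCross_eq_norm_mul_sin_ang hu hw, mul_pos_iff_of_pos_left hnorm]

lemma clockwiseCross_pos (hpos : 0 < ang u w) (hlt : ang u w < Real.pi) :
    0 < clockwiseCross u w := by
  obtain ⟨hu, hw⟩ := ne_zero_of_ang_pos hpos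
  exact (clockwiseCross_pos_iff hu hw).2 (Real.sin_pos_of_pos_of_lt_pi hpos hlt)

lemma clockwiseCross_nonneg (hpos : 0 < ang u w) (hle : ang u w ≤ Real.pi) :
    0 ≤ clockwiseCross u w := by
  obtain ⟨hu, hw⟩ := ne_zero_of_ang_pos hpos
  rw [clockwiseCross_eq_norm_mul_sin_ang hu hw]
  have := Real.sin_nonneg_of_nonneg_of_le_pi hpos.le hle
  positivity

lemma clockwiseCross_pos_of_ang_lt_ang (hpos : 0 < ang u x) (hlt : ang u x < ang u w)
    (hle : ang u w ≤ Real.pi) : 0 < clockwiseCross x w := by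
  obtain ⟨hu, hx⟩ := ne_zero_of_ang_pos hpos
  obtain ⟨-, hw⟩ := ne_zero_of_ang_pos (hpos.trans hlt)
  rw [clockwiseCross_pos_iff hx hw, ← Real.Angle.sin_coe, ← coe_ang_sub_ang hu hx hw,
    Real.Angle.sin_coe]
  exact Real.sin_pos_of_pos_of_lt_pi (by linarith) (by linarith)

lemma dot_neg_of_ang_lt_ang (hpos : 0 < ang u x) (hlt : ang u x < ang u w)
    (hle : ang u w ≤ Real.pi) {d : ℝ × ℝ} (hu : u.1 * d.1 + u.2 * d.2 < 0)
    (hw : w.1 * d.1 + w.2 * d.2 < 0) : x.1 * d.1 + x.2 * d.2 < 0 := by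
  have hux : 0 < clockwiseCross u x := clockwiseCross_pos hpos (hlt.trans_le hle)
  have hxw : 0 < clockwiseCross x w := clockwiseCross_pos_of_ang_lt_ang hpos hlt hle
  have huw : 0 ≤ clockwiseCross u w := clockwiseCross_nonneg (hpos.trans hlt) hle
  refine neg_of_mul_neg_right ?_ huw
  rw [clockwiseCross_mul_dot]
  exact add_neg (mul_neg_of_pos_of_neg hxw hu) (mul_neg_of_pos_of_neg hux hw)

lemma halfplane_inter_subset_or_subset_union (hpos : 0 < ang u x) (hlt : ang u x < ang u w)
    (hle : ang u w ≤ Real.pi) (a b c : ℝ) :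
    halfplane u a ∩ halfplane w b ⊆ halfplane x c ∨
      halfplane x c ⊆ halfplane u a ∪ halfplane w b := by
  by_contra! h
  obtain ⟨⟨p, ⟨hpu, hpw⟩, hpx⟩, q, hqx, hq⟩ := h.imp Set.not_subset.1 Set.not_subset.1
  simp only [halfplane, Set.mem_union, Set.mem_ofPred_eq, not_or, not_le] at hpu hpw hpx hqx hq
  have hx := dot_neg_of_ang_lt_ang (d := q - p) hpos hlt hle
    (by simp only [Prod.fst_sub, Prod.snd_sub]; linarith)
    (by simp only [Prod.fst_sub, Prod.snd_sub]; linarith)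
  simp only [Prod.fst_sub, Prod.snd_sub] at hx
  linarith

end Angle

lemma sUnion_sdiff_singleton_of_subset_union {α : Type*} {R : Set (Set α)} {A B H : Set α}
    (hA : A ∈ R) (hB : B ∈ R) (hAH : A ≠ H) (hBH : B ≠ H) (hsub : H ⊆ A ∪ B) :
    ⋃₀ (R \ {H}) = ⋃₀ R := by
  refine (Set.sUnion_subset_sUnion Set.sdiff_subset).antisymm (Set.sUnion_subset fun G hG => ?_)
  rcases eq_or_ne G H with rfl | hGH
  · exact hsub.trans <| Set.union_subset (Set.subset_sUnion_of_mem ⟨hA, hAH⟩)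
      (Set.subset_sUnion_of_mem ⟨hB, hBH⟩)
  · exact Set.subset_sUnion_of_mem ⟨hG, hGH⟩

lemma inter_subset_of_sUnion_sdiff_singleton_ne {α : Type*} {R : Set (Set α)} {A B H : Set α}
    (hA : A ∈ R) (hB : B ∈ R) (hne : ⋃₀ (R \ {H}) ≠ ⋃₀ R)
    (hsub : A ∩ B ⊆ H ∨ H ⊆ A ∪ B) : A ∩ B ⊆ H := by
  rcases eq_or_ne A H with rfl | hAH
  · exact Set.inter_subset_left
  rcases eq_or_ne B H with rfl | hBH
  · exact Set.inter_subset_right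
  exact hsub.resolve_right fun h => hne (sUnion_sdiff_singleton_of_subset_union hA hB hAH hBH h)

lemma irreducibleFam_image_univ_iff {ι : Type*} [Fintype ι] (H : ι → Set (ℝ × ℝ)) :
    IrreducibleFam (Finset.image H Finset.univ) ↔
      ∀ i, ⋃₀ (Set.range H \ {H i}) ≠ ⋃₀ Set.range H := by
  simp [IrreducibleFam, Redundant, eq_comm]

lemma lt_and_lt_last_of_ne_first_of_ne_last {α : Type*} [Preorder α] {t : ℕ} (ht : 2 ≤ t)
    {f : Fin t → α} {m : α} (hm : m < f ⟨1, ht⟩)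
    (hmono : ∀ i j : Fin t, 0 < i.val → i < j → f i < f j) {i : Fin t}
    (hfirst : i ≠ ⟨0, Nat.zero_lt_of_lt ht⟩) (hlast : i ≠ ⟨t - 1, Nat.sub_one_lt_of_lt ht⟩) :
    m < f i ∧ f i < f ⟨t - 1, Nat.sub_one_lt_of_lt ht⟩ := by
  simp only [ne_eq, Fin.ext_iff] at hfirst hlast
  refine ⟨?_, hmono _ _ (by omega) (Fin.lt_def.2 (by dsimp only; omega))⟩
  rcases eq_or_ne i ⟨1, ht⟩ with rfl | hone
  · exact hm
  · rw [ne_eq, Fin.ext_iff] at hone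
    exact hm.trans (hmono _ _ one_pos (Fin.lt_def.2 (by dsimp only at *; omega)))

theorem stmt9_general {ι : Type*} (v : ι → ℝ × ℝ) (c : ι → ℝ) (a b : ι)
    (hle : ang (v a) (v b) ≤ Real.pi)
    (hbetween : ∀ i, i ≠ a → i ≠ b →
      0 < ang (v a) (v i) ∧ ang (v a) (v i) < ang (v a) (v b))
    (hirr : ∀ i, i ≠ a → i ≠ b →
      ⋃₀ (Set.range (fun j => halfplane (v j) (c j)) \ {halfplane (v i) (c i)}) ≠
        ⋃₀ Set.range (fun j => halfplane (v j) (c j))) :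
    (⋂ i, halfplane (v i) (c i)) = halfplane (v a) (c a) ∩ halfplane (v b) (c b) := by
  refine (Set.subset_inter (Set.iInter_subset _ a) (Set.iInter_subset _ b)).antisymm
    (Set.subset_iInter fun i => ?_)
  rcases eq_or_ne i a with rfl | hia
  · exact Set.inter_subset_left
  rcases eq_or_ne i b with rfl | hib
  · exact Set.inter_subset_right
  obtain ⟨hpos, hlt⟩ := hbetween i hia hib
  exact inter_subset_of_sUnion_sdiff_singleton_ne (Set.mem_range_self a) (Set.mem_range_self b)
    (hirr i hia hib) (halfplane_inter_subset_or_subset_union hpos hlt hle _ _ _)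

theorem stmt9 (t : ℕ) (ht : 2 ≤ t) (v : Fin t → ℝ × ℝ) (c : Fin t → ℝ)
    (hunit : ∀ i : Fin t, (v i).1 ^ 2 + (v i).2 ^ 2 = 1)
    (hpos : 0 < ang (v ⟨0, by omega⟩) (v ⟨1, by omega⟩))
    (hmono : ∀ i j : Fin t, 0 < i.val → i < j →
      ang (v ⟨0, by omega⟩) (v i) < ang (v ⟨0, by omega⟩) (v j))
    (hle : ang (v ⟨0, by omega⟩) (v ⟨t - 1, by omega⟩) ≤ Real.pi)
    (hirr : IrreducibleFam
      (Finset.image (fun i : Fin t => halfplane (v i) (c i)) Finset.univ)) :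
    (⋂ i : Fin t, halfplane (v i) (c i)) =
      halfplane (v ⟨0, by omega⟩) (c ⟨0, by omega⟩) ∩
        halfplane (v ⟨t - 1, by omega⟩) (c ⟨t - 1, by omega⟩) :=
  stmt9_general v c _ _ hle (fun _ => lt_and_lt_last_of_ne_first_of_ne_last ht hpos hmono)
    fun i _ _ => (irreducibleFam_image_univ_iff _).1 hirr i
end

section
/- Let S be a finite set of points in ℝ², let 𝒬 be a finite set of unit squares with S ⊆ ⋃𝒬, and let c ≥ 1 be a real number. For each unit-grid cell □ = [i, i+1) × [j, j+1) (i, j ∈ ℤ), set S_□ = S ∩ □ and 𝒬_□ = {Q ∈ 𝒬 : Q ∩ □ ≠ ∅}, and suppose 𝒬*_□ ⊆ 𝒬_□ is a set cover of S_□ with |𝒬*_□| ≤ c · min{|ℛ| : ℛ ⊆ 𝒬_□ is a set cover of S_□}. Then ply(⋃_□ 𝒬*_□) ≤ 36c · min{ply(ℛ) : ℛ ⊆ 𝒬 is a set cover of S}. -/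
open scoped Classical

/-- The ply of a finite family of subsets of the plane: the maximum, over all points
of the plane, of the number of members containing the point. -/
noncomputable def ply (F : Finset (Set (ℝ × ℝ))) : ℕ :=
  sSup (Set.range fun p : ℝ × ℝ => memb p F)

/-!
The bound is the product of two counts. A unit square meeting a grid cell contains one of the four
corners of the cell, so the members of an optimal cover `G` of `S` that meet a cell number at most
`4 * ply G`; as they cover the points of `S` in that cell, the local cover has at most
`4 * c * ply G` members. A unit square through a point `p` only meets the `3 × 3` block of cells
around `p`, so the members of the union containing `p` come from nine local covers.
-/

section Ply

theorem memb_le_card (p : ℝ × ℝ) (F : Finset (Set (ℝ × ℝ))) : memb p F ≤ F.card :=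
  Finset.card_filter_le _ _

theorem bddAbove_range_memb (F : Finset (Set (ℝ × ℝ))) :
    BddAbove (Set.range fun p : ℝ × ℝ => memb p F) :=
  ⟨F.card, Set.forall_mem_range.2 fun p => memb_le_card p F⟩

theorem memb_le_ply (p : ℝ × ℝ) (F : Finset (Set (ℝ × ℝ))) : memb p F ≤ ply F :=
  le_csSup (bddAbove_range_memb F) ⟨p, rfl⟩

theorem exists_memb_eq_ply (F : Finset (Set (ℝ × ℝ))) : ∃ p, memb p F = ply F :=
  Nat.sSup_mem (Set.range_nonempty _) (bddAbove_range_memb F)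

theorem memb_mono (p : ℝ × ℝ) {F G : Finset (Set (ℝ × ℝ))} (h : F ⊆ G) : memb p F ≤ memb p G :=
  Finset.card_le_card (Finset.filter_subset_filter _ h)

theorem memb_le_sum_card {κ : Type*} {F : Finset (Set (ℝ × ℝ))} {A : κ → Finset (Set (ℝ × ℝ))}
    {T : Finset κ} {p : ℝ × ℝ} (h : ∀ R ∈ F, p ∈ R → ∃ t ∈ T, R ∈ A t) :
    memb p F ≤ ∑ t ∈ T, (A t).card := by
  have hsub : F.filter (fun R => p ∈ R) ⊆ T.biUnion A := fun R hR =>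
    have ⟨hRF, hpR⟩ := Finset.mem_filter.1 hR
    Finset.mem_biUnion.2 (h R hRF hpR)
  exact (Finset.card_le_card hsub).trans Finset.card_biUnion_le

end Ply

section LocalCovers

/-- `P` is a piercing (hitting) set of the family `F`. -/
def Pierces (P : Finset (ℝ × ℝ)) (F : Finset (Set (ℝ × ℝ))) : Prop :=
  ∀ R ∈ F, ∃ p ∈ P, p ∈ R

/-- The members of `F` that meet `C`: the family `𝒬_□` when `F = 𝒬` and `C = □`. -/
noncomputable def meeting (F : Finset (Set (ℝ × ℝ))) (C : Set (ℝ × ℝ)) : Finset (Set (ℝ × ℝ)) :=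
  F.filter fun R => (R ∩ C).Nonempty

/-- The least number of members of a set cover of `S` chosen from `F`, with the junk value `0` if
`F` does not cover `S`. -/
noncomputable def minCoverCard (S : Finset (ℝ × ℝ)) (F : Finset (Set (ℝ × ℝ))) : ℕ :=
  sInf {n : ℕ | ∃ G ⊆ F, IsCover S G ∧ G.card = n}

/-- The least ply of a set cover of `S` chosen from `F`, with the junk value `0` if `F` does not
cover `S`. -/
noncomputable def minPly (S : Finset (ℝ × ℝ)) (F : Finset (Set (ℝ × ℝ))) : ℕ :=
  sInf {n : ℕ | ∃ G ⊆ F, IsCover S G ∧ ply G = n}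

variable {S P : Finset (ℝ × ℝ)} {F G Q : Finset (Set (ℝ × ℝ))} {C : Set (ℝ × ℝ)}

theorem Pierces.mono (h : Pierces P G) (hFG : F ⊆ G) : Pierces P F :=
  fun R hR => h R (hFG hR)

theorem Pierces.card_le (h : Pierces P F) (hFG : F ⊆ G) : F.card ≤ P.card * ply G := by
  have hsub : F ⊆ P.biUnion fun p => F.filter fun R => p ∈ R := fun R hR =>
    have ⟨p, hpP, hpR⟩ := h R hR
    Finset.mem_biUnion.2 ⟨p, hpP, Finset.mem_filter.2 ⟨hR, hpR⟩⟩
  exact (Finset.card_le_card hsub).trans <|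
    Finset.card_biUnion_le_card_mul _ _ _ fun p _ => (memb_mono p hFG).trans (memb_le_ply p G)

theorem meeting_subset : meeting F C ⊆ F :=
  Finset.filter_subset _ _

theorem meeting_mono (h : F ⊆ G) : meeting F C ⊆ meeting G C :=
  Finset.filter_subset_filter _ h

theorem minCoverCard_le (hGF : G ⊆ F) (hG : IsCover S G) : minCoverCard S F ≤ G.card :=
  Nat.sInf_le ⟨G, hGF, hG, rfl⟩

theorem IsCover.exists_ply_eq_minPly (h : IsCover S F) :
    ∃ G ⊆ F, IsCover S G ∧ ply G = minPly S F :=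
  Nat.sInf_mem (s := {n : ℕ | ∃ G ⊆ F, IsCover S G ∧ ply G = n}) ⟨_, F, subset_rfl, h, rfl⟩

theorem IsCover.filter_meeting (h : IsCover S F) (C : Set (ℝ × ℝ)) :
    IsCover (S.filter fun p => p ∈ C) (meeting F C) := fun p hp =>
  have ⟨hpS, hpC⟩ := Finset.mem_filter.1 hp
  have ⟨R, hR, hpR⟩ := h p hpS
  ⟨R, Finset.mem_filter.2 ⟨hR, p, hpR, hpC⟩, hpR⟩

theorem IsCover.minCoverCard_meeting_le (hcov : IsCover S Q) (hP : Pierces P (meeting Q C)) :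
    minCoverCard (S.filter fun p => p ∈ C) (meeting Q C) ≤ P.card * minPly S Q := by
  obtain ⟨G, hGQ, hG, hGply⟩ := hcov.exists_ply_eq_minPly
  calc minCoverCard (S.filter fun p => p ∈ C) (meeting Q C)
      ≤ (meeting G C).card := minCoverCard_le (meeting_mono hGQ) (hG.filter_meeting C)
    _ ≤ P.card * ply G := (hP.mono (meeting_mono hGQ)).card_le meeting_subset
    _ = P.card * minPly S Q := by rw [hGply]

theorem IsCover.ply_localCovers_le {κ : Type*} {C : κ → Set (ℝ × ℝ)}
    {A : κ → Finset (Set (ℝ × ℝ))} {k m : ℕ} {c : ℝ} (hcov : IsCover S Q) (hc : 0 ≤ c)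
    (hpierce : ∀ t, ∃ P, P.card ≤ k ∧ Pierces P (meeting Q (C t)))
    (hnear : ∀ p, ∃ T : Finset κ, T.card ≤ m ∧ ∀ R ∈ Q, p ∈ R → ∀ t, (R ∩ C t).Nonempty → t ∈ T)
    (hsub : ∀ t, A t ⊆ meeting Q (C t))
    (hsize : ∀ t, ((A t).card : ℝ) ≤
      c * minCoverCard (S.filter fun p => p ∈ C t) (meeting Q (C t))) :
    (ply (Q.filter fun R => ∃ t, R ∈ A t) : ℝ) ≤ m * k * c * minPly S Q := by
  have hcard (t : κ) : ((A t).card : ℝ) ≤ c * (k * minPly S Q) := by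
    obtain ⟨P, hPk, hP⟩ := hpierce t
    have hmin := (hcov.minCoverCard_meeting_le hP).trans (Nat.mul_le_mul_right _ hPk)
    exact (hsize t).trans (mul_le_mul_of_nonneg_left (mod_cast hmin) hc)
  obtain ⟨p, hp⟩ := exists_memb_eq_ply (Q.filter fun R => ∃ t, R ∈ A t)
  obtain ⟨T, hTm, hT⟩ := hnear p
  have hmemb : memb p (Q.filter fun R => ∃ t, R ∈ A t) ≤ ∑ t ∈ T, (A t).card := by
    refine memb_le_sum_card fun R hR hpR => ?_
    obtain ⟨hRQ, t, hRt⟩ := Finset.mem_filter.1 hR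
    exact ⟨t, hT R hRQ hpR t (Finset.mem_filter.1 (hsub t hRt)).2, hRt⟩
  calc (ply (Q.filter fun R => ∃ t, R ∈ A t) : ℝ)
      ≤ ∑ t ∈ T, ((A t).card : ℝ) := by rw [← hp]; exact mod_cast hmemb
    _ ≤ T.card • (c * (k * minPly S Q)) := Finset.sum_le_card_nsmul _ _ _ fun t _ => hcard t
    _ ≤ m * (c * (k * minPly S Q)) := by rw [nsmul_eq_mul]; gcongr
    _ = m * k * c * minPly S Q := by ring

end LocalCovers

section Intervals

theorem left_or_right_mem_Icc_of_inter_Ico_nonempty {α : Type*} [Add α] [LinearOrder α]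
    [AddRightMono α] {a x l : α} (h : (Set.Icc a (a + l) ∩ Set.Ico x (x + l)).Nonempty) :
    x ∈ Set.Icc a (a + l) ∨ x + l ∈ Set.Icc a (a + l) := by
  obtain ⟨y, ⟨hay, hya⟩, hxy, hyx⟩ := h
  rcases le_total a x with hax | hxa
  · exact .inl ⟨hax, hxy.trans hya⟩
  · exact .inr ⟨hay.trans hyx.le, by gcongr⟩

variable {α : Type*} [Ring α] [LinearOrder α] [IsStrictOrderedRing α] [FloorRing α]

theorem floor_mem_Icc_of_le_add_one {x y : α} (hxy : x ≤ y + 1) (hyx : y ≤ x + 1) :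
    ⌊y⌋ ∈ Finset.Icc (⌊x⌋ - 1) (⌊x⌋ + 1) := by
  rw [Finset.mem_Icc, ← Int.floor_sub_one, ← Int.floor_add_one]
  exact ⟨Int.floor_mono (sub_le_iff_le_add.2 hxy), Int.floor_mono hyx⟩

theorem mem_Icc_floor_of_inter_Ico_nonempty {a x : α} {i : ℤ} (hx : x ∈ Set.Icc a (a + 1))
    (h : (Set.Icc a (a + 1) ∩ Set.Ico (i : α) (i + 1)).Nonempty) :
    i ∈ Finset.Icc (⌊x⌋ - 1) (⌊x⌋ + 1) := by
  obtain ⟨y, hy, hyi⟩ := h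
  have hxy : x ≤ y + 1 := hx.2.trans (by gcongr; exact hy.1)
  have hyx : y ≤ x + 1 := hy.2.trans (by gcongr; exact hx.1)
  rw [← Int.floor_eq_iff.2 hyi]
  exact floor_mem_Icc_of_le_add_one hxy hyx

end Intervals

section Grid

theorem unitSquare_eq_prod (a b : ℝ) :
    unitSquare a b = Set.Icc a (a + 1) ×ˢ Set.Icc b (b + 1) := by
  ext p
  simp only [unitSquare, Set.mem_ofPred_eq, Set.mem_prod, Set.mem_Icc, and_assoc]

theorem gridCell_eq_prod (i j : ℤ) :
    gridCell i j = Set.Ico (i : ℝ) (i + 1) ×ˢ Set.Ico (j : ℝ) (j + 1) := by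
  ext p
  simp only [gridCell, Set.mem_ofPred_eq, Set.mem_prod, Set.mem_Ico, and_assoc]

theorem unitSquare_inter_gridCell_nonempty_iff {a b : ℝ} {i j : ℤ} :
    (unitSquare a b ∩ gridCell i j).Nonempty ↔
      (Set.Icc a (a + 1) ∩ Set.Ico (i : ℝ) (i + 1)).Nonempty ∧
        (Set.Icc b (b + 1) ∩ Set.Ico (j : ℝ) (j + 1)).Nonempty := by
  rw [unitSquare_eq_prod, gridCell_eq_prod, Set.prod_inter_prod, Set.prod_nonempty_iff]

/-- The four corners of the closure of `gridCell i j`, used to pierce the unit squares that meet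
the cell. -/
noncomputable def cellCorners (i j : ℤ) : Finset (ℝ × ℝ) :=
  {(i : ℝ), (i : ℝ) + 1} ×ˢ {(j : ℝ), (j : ℝ) + 1}

/-- The indices `(i, j)` of the `3 × 3` block of grid cells centred at the cell containing `p`. -/
noncomputable def cellBlock (p : ℝ × ℝ) : Finset (ℤ × ℤ) :=
  Finset.Icc (⌊p.1⌋ - 1) (⌊p.1⌋ + 1) ×ˢ Finset.Icc (⌊p.2⌋ - 1) (⌊p.2⌋ + 1)

theorem card_cellCorners_le (i j : ℤ) : (cellCorners i j).card ≤ 4 := by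
  rw [cellCorners, Finset.card_product]
  exact Nat.mul_le_mul Finset.card_le_two Finset.card_le_two

theorem card_cellBlock (p : ℝ × ℝ) : (cellBlock p).card = 9 := by
  have hcard (n : ℤ) : (Finset.Icc (n - 1) (n + 1)).card = 3 := by
    rw [Int.card_Icc]
    lia
  rw [cellBlock, Finset.card_product, hcard, hcard]

theorem exists_mem_cellCorners_mem_unitSquare {a b : ℝ} {i j : ℤ}
    (h : (unitSquare a b ∩ gridCell i j).Nonempty) : ∃ p ∈ cellCorners i j, p ∈ unitSquare a b := by
  have exists_endpoint {a : ℝ} {i : ℤ}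
      (h : (Set.Icc a (a + 1) ∩ Set.Ico (i : ℝ) (i + 1)).Nonempty) :
      ∃ x ∈ ({(i : ℝ), (i : ℝ) + 1} : Finset ℝ), x ∈ Set.Icc a (a + 1) := by
    simpa only [Finset.exists_mem_insert, Finset.mem_singleton, exists_eq_left] using
      left_or_right_mem_Icc_of_inter_Ico_nonempty h
  obtain ⟨hx, hy⟩ := unitSquare_inter_gridCell_nonempty_iff.1 h
  obtain ⟨x, hxi, hxa⟩ := exists_endpoint hx
  obtain ⟨y, hyj, hyb⟩ := exists_endpoint hy
  rw [unitSquare_eq_prod]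
  exact ⟨(x, y), Finset.mk_mem_product hxi hyj, Set.mk_mem_prod hxa hyb⟩

theorem mem_cellBlock_of_mem_unitSquare {a b : ℝ} {i j : ℤ} {p : ℝ × ℝ} (hp : p ∈ unitSquare a b)
    (h : (unitSquare a b ∩ gridCell i j).Nonempty) : (i, j) ∈ cellBlock p := by
  rw [unitSquare_eq_prod] at hp
  obtain ⟨hx, hy⟩ := unitSquare_inter_gridCell_nonempty_iff.1 h
  exact Finset.mk_mem_product (mem_Icc_floor_of_inter_Ico_nonempty hp.1 hx)
    (mem_Icc_floor_of_inter_Ico_nonempty hp.2 hy)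

theorem pierces_cellCorners {Q : Finset (Set (ℝ × ℝ))}
    (hsq : ∀ R ∈ Q, ∃ a b : ℝ, R = unitSquare a b) (i j : ℤ) :
    Pierces (cellCorners i j) (meeting Q (gridCell i j)) := by
  intro R hR
  obtain ⟨hRQ, hRC⟩ := Finset.mem_filter.1 hR
  obtain ⟨a, b, rfl⟩ := hsq R hRQ
  exact exists_mem_cellCorners_mem_unitSquare hRC

end Grid

theorem stmt14_general {S : Finset (ℝ × ℝ)} {Q : Finset (Set (ℝ × ℝ))}
    (hsq : ∀ R ∈ Q, ∃ a b : ℝ, R = unitSquare a b) (hcov : IsCover S Q) {c : ℝ} (hc : 0 ≤ c)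
    {Qstar : ℤ → ℤ → Finset (Set (ℝ × ℝ))}
    (hsub : ∀ i j : ℤ, Qstar i j ⊆ meeting Q (gridCell i j))
    (hsize : ∀ i j : ℤ, ((Qstar i j).card : ℝ) ≤
      c * minCoverCard (S.filter fun p => p ∈ gridCell i j) (meeting Q (gridCell i j))) :
    (ply (Q.filter fun R => ∃ i j : ℤ, R ∈ Qstar i j) : ℝ) ≤ 36 * c * minPly S Q := by
  have hpierce (t : ℤ × ℤ) : ∃ P, P.card ≤ 4 ∧ Pierces P (meeting Q (gridCell t.1 t.2)) :=
    ⟨cellCorners t.1 t.2, card_cellCorners_le t.1 t.2, pierces_cellCorners hsq t.1 t.2⟩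
  have hnear (p : ℝ × ℝ) : ∃ T : Finset (ℤ × ℤ), T.card ≤ 9 ∧
      ∀ R ∈ Q, p ∈ R → ∀ t, (R ∩ gridCell t.1 t.2).Nonempty → t ∈ T := by
    refine ⟨cellBlock p, (card_cellBlock p).le, fun R hR hpR t ht => ?_⟩
    obtain ⟨a, b, rfl⟩ := hsq R hR
    exact mem_cellBlock_of_mem_unitSquare hpR ht
  have hply := hcov.ply_localCovers_le hc hpierce hnear (A := fun t => Qstar t.1 t.2)
    (fun t => hsub t.1 t.2) (fun t => hsize t.1 t.2)
  have h36 : ((9 : ℕ) : ℝ) * (4 : ℕ) = 36 := by norm_num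
  simpa only [Prod.exists, h36] using hply

theorem stmt14 (S : Finset (ℝ × ℝ)) (Q : Finset (Set (ℝ × ℝ)))
    (hsq : ∀ R ∈ Q, ∃ a b : ℝ, R = unitSquare a b)
    (hcov : IsCover S Q) (c : ℝ) (hc : 1 ≤ c)
    (Qstar : ℤ → ℤ → Finset (Set (ℝ × ℝ)))
    (hsub : ∀ i j : ℤ, Qstar i j ⊆ Q.filter (fun R => (R ∩ gridCell i j).Nonempty))
    (hcovloc : ∀ i j : ℤ, IsCover (S.filter (fun p => p ∈ gridCell i j)) (Qstar i j))
    (hsize : ∀ i j : ℤ, ((Qstar i j).card : ℝ) ≤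
      c * (sInf {n : ℕ | ∃ G ⊆ Q.filter (fun R => (R ∩ gridCell i j).Nonempty),
            IsCover (S.filter (fun p => p ∈ gridCell i j)) G ∧ G.card = n} : ℕ)) :
    (ply (Q.filter (fun R => ∃ i j : ℤ, R ∈ Qstar i j)) : ℝ) ≤
      36 * c * (sInf {n : ℕ | ∃ G ⊆ Q, IsCover S G ∧ ply G = n} : ℕ) :=
  stmt14_general hsq hcov (zero_le_one.trans hc) hsub hsize
end
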